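/- There exists a 2-(24,4,1) packing with 42 blocks whose leave is a vertex-disjoint union of three cycles of length 8, covering all 24 points (leave type 8^3). -/

import Mathlib

/-!
The packing comes from the method of differences. Split the points into `ZMod 8` (labels `0, …, 7`)
and `ZMod 16` (labels `8, …, 23`), write `aᵢ` and `bⱼ` for the points of the two parts, and let
`ZMod 16` translate both. Four base blocks are developed under this action:

* `{a₀, a₂, a₄, a₆}`, with 2 translates, covers the differences `±2, 4` of the first part;
* `{a₀, a₃, b₂, b₁₀}`, with 8 translates, covers `±3` in the first part and `8` in the second;
* `{a₀, b₀, b₁, b₅}` and `{a₀, b₃, b₆, b₁₂}`, with 16 translates each, cover `±1, ±4, ±5` and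
  `±3, ±6, ±7` in the second part.

The mixed differences `j - i` of pairs `aᵢ, bⱼ` lie in `ZMod 8`; the last three base blocks
cover `{2, 7}`, `{0, 1, 5}` and `{3, 4, 6}`, a partition. Hence the leave consists of the pairs with
difference `±1` in `ZMod 8`, one cycle of length 8, and of those with difference `±2` in `ZMod 16`,
two cycles of length 8.
-/

/-- A 2-(24,4,1) packing: a collection of 4-element blocks on 24 points such that
every pair of distinct points lies in at most one block. -/
def IsPacking (B : Finset (Finset (Fin 24))) : Prop :=
  (∀ b ∈ B, b.card = 4) ∧
  ∀ p q : Fin 24, p ≠ q → ∀ b₁ ∈ B, ∀ b₂ ∈ B,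
    p ∈ b₁ → q ∈ b₁ → p ∈ b₂ → q ∈ b₂ → b₁ = b₂

/-- Adjacency in the leave of a packing: the pair of distinct points is covered by no block. -/
def LeaveAdj (B : Finset (Finset (Fin 24))) (p q : Fin 24) : Prop :=
  p ≠ q ∧ ∀ b ∈ B, ¬ (p ∈ b ∧ q ∈ b)

/-- The leave of the packing `B` is a vertex-disjoint union of cycles whose lengths are
given by the list `L`, covering all 24 points. -/
def LeaveIsCycleType (B : Finset (Finset (Fin 24))) (L : List ℕ) : Prop :=
  ∃ f : (i : Fin L.length) → ZMod (L.get i) → Fin 24,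
    Function.Bijective (fun x : Σ i : Fin L.length, ZMod (L.get i) => f x.1 x.2) ∧
    ∀ p q : Fin 24, LeaveAdj B p q ↔
      ∃ i k, (p = f i k ∧ q = f i (k + 1)) ∨ (q = f i k ∧ p = f i (k + 1))

open scoped Pointwise

theorem isPacking_of_card_inter_le_one {B : Finset (Finset (Fin 24))} (hcard : ∀ b ∈ B, b.card = 4)
    (hinter : ∀ b ∈ B, ∀ c ∈ B, b = c ∨ (b ∩ c).card ≤ 1) : IsPacking B := by
  refine ⟨hcard, fun p q hpq b hb c hc hpb hqb hpc hqc => (hinter b hb c hc).resolve_right ?_⟩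
  rw [not_le, Finset.one_lt_card]
  exact ⟨p, Finset.mem_inter.2 ⟨hpb, hpc⟩, q, Finset.mem_inter.2 ⟨hqb, hqc⟩, hpq⟩

theorem leaveIsCycleType_replicate {B : Finset (Finset (Fin 24))} {m n : ℕ}
    {f : Fin m × ZMod n → Fin 24} {succ : Fin 24 → Fin 24} (hf : Function.Bijective f)
    (hsucc : ∀ i k, f (i, k + 1) = succ (f (i, k)))
    (hadj : ∀ p q, LeaveAdj B p q ↔ q = succ p ∨ p = succ q) :
    LeaveIsCycleType B (List.replicate m n) := by
  let index : Fin (List.replicate m n).length ≃ Fin m := finCongr List.length_replicate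
  let residue (i : Fin (List.replicate m n).length) :
      ZMod ((List.replicate m n).get i) ≃+* ZMod n := ZMod.ringEquivCongr (by simp)
  let point := (index.sigmaCongr fun i => (residue i).toEquiv).trans (Equiv.sigmaEquivProd _ _)
  have eq_succ_iff (p q : Fin 24) : q = succ p ↔
      ∃ i k, p = f (index i, residue i k) ∧ q = f (index i, residue i (k + 1)) := by
    simp only [map_add, map_one, hsucc]
    constructor
    · obtain ⟨⟨i, k⟩, rfl⟩ := (hf.comp point.bijective).surjective p
      exact fun h => ⟨i, k, rfl, h⟩
    · rintro ⟨i, k, rfl, rfl⟩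
      rfl
  refine ⟨fun i k => f (index i, residue i k), hf.comp point.bijective, fun p q => ?_⟩
  simp only [hadj, eq_succ_iff, exists_or]

section Development

variable {G α ι : Type*} [AddGroup G] [Fintype G] [Fintype ι] [DecidableEq α] [AddAction G α]

variable (G) in
/-- The development of the base blocks `b i` under a finite group `G` acting on the points: the set
of all their translates. -/
def development (b : ι → Finset α) : Finset (Finset α) :=
  Finset.univ.image fun x : G × ι => x.1 +ᵥ b x.2

theorem mem_development {b : ι → Finset α} {s : Finset α} :
    s ∈ development G b ↔ ∃ (g : G) (i : ι), g +ᵥ b i = s := by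
  simp [development]

theorem eq_or_card_inter_le_one_of_mem_development {b : ι → Finset α}
    (hinter : ∀ (g : G) (i j : ι), g +ᵥ b i = b j ∨ ((g +ᵥ b i) ∩ b j).card ≤ 1)
    {s t : Finset α} (hs : s ∈ development G b) (ht : t ∈ development G b) :
    s = t ∨ (s ∩ t).card ≤ 1 := by
  obtain ⟨g, i, rfl⟩ := mem_development.1 hs
  obtain ⟨h, j, rfl⟩ := mem_development.1 ht
  have translate : g +ᵥ b i = h +ᵥ ((-h + g) +ᵥ b i) := by simp [vadd_vadd]
  rw [translate, vadd_left_cancel_iff, ← Finset.vadd_finset_inter, Finset.card_vadd_finset]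
  exact hinter (-h + g) i j

variable [AddAction G (Fin 24)]

theorem isPacking_development {b : ι → Finset (Fin 24)} (hcard : ∀ i, (b i).card = 4)
    (hinter : ∀ (g : G) (i j : ι), g +ᵥ b i = b j ∨ ((g +ᵥ b i) ∩ b j).card ≤ 1) :
    IsPacking (development G b) := by
  refine isPacking_of_card_inter_le_one (fun s hs => ?_)
    fun s hs t ht => eq_or_card_inter_le_one_of_mem_development hinter hs ht
  obtain ⟨g, i, rfl⟩ := mem_development.1 hs
  rw [Finset.card_vadd_finset, hcard i]

theorem leaveAdj_development_iff {b : ι → Finset (Fin 24)} {p q : Fin 24} :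
    LeaveAdj (development G b) p q ↔
      p ≠ q ∧ ∀ (g : G) (i : ι), ¬ (g +ᵥ p ∈ b i ∧ g +ᵥ q ∈ b i) := by
  rw [LeaveAdj, ← (Equiv.neg G).forall_congr_right]
  simp only [development, Finset.forall_mem_image, Finset.mem_univ, forall_const, Prod.forall,
    Equiv.neg_apply, Finset.neg_vadd_mem_iff]

theorem leaveAdj_development_vadd_iff {b : ι → Finset (Fin 24)} (g : G) {p q : Fin 24} :
    LeaveAdj (development G b) (g +ᵥ p) (g +ᵥ q) ↔ LeaveAdj (development G b) p q := by
  simp only [leaveAdj_development_iff, ne_eq, vadd_left_cancel_iff, vadd_vadd]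
  rw [(Equiv.addRight g).forall_congr_left]
  simp

end Development

instance : AddAction (ZMod 16) (ZMod 8) :=
  AddAction.compHom (ZMod 8) (ZMod.castHom (by norm_num : 8 ∣ 16) (ZMod 8)).toAddMonoidHom

/-- The action of `ZMod 16` by translation on the points, the first 8 of which are labelled by
`ZMod 8` and the last 16 by `ZMod 16`. -/
instance : AddAction (ZMod 16) (Fin 24) :=
  (finSumFinEquiv (m := 8) (n := 16)).symm.addAction (β := ZMod 8 ⊕ ZMod 16) (ZMod 16)

/-- The base blocks `{a₀, a₂, a₄, a₆}`, `{a₀, a₃, b₂, b₁₀}`, `{a₀, b₀, b₁, b₅}` and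
`{a₀, b₃, b₆, b₁₂}`, where `aᵢ` is the point `i` and `bⱼ` is the point `8 + j`. -/
def baseBlock : Fin 4 → Finset (Fin 24) :=
  ![{0, 2, 4, 6}, {0, 3, 10, 18}, {0, 8, 9, 13}, {0, 11, 14, 20}]

theorem card_baseBlock : ∀ i, (baseBlock i).card = 4 := by
  decide +kernel

theorem vadd_baseBlock_eq_or_card_inter_le_one : ∀ (g : ZMod 16) (i j : Fin 4),
    g +ᵥ baseBlock i = baseBlock j ∨ ((g +ᵥ baseBlock i) ∩ baseBlock j).card ≤ 1 := by
  decide +kernel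

theorem card_development_baseBlock : (development (ZMod 16) baseBlock).card = 42 := by
  decide +kernel

/-- The successor of a point on its leave cycle: `aᵢ ↦ aᵢ₊₁` and `bⱼ ↦ bⱼ₊₂`. -/
def leaveSucc (p : Fin 24) : Fin 24 :=
  if p < 8 then (1 : ZMod 16) +ᵥ p else (2 : ZMod 16) +ᵥ p

theorem leaveSucc_vadd : ∀ (g : ZMod 16) (p : Fin 24), leaveSucc (g +ᵥ p) = g +ᵥ leaveSucc p := by
  decide +kernel

theorem exists_vadd_zero_or_eight_eq : ∀ p : Fin 24,
    ∃ g : ZMod 16, g +ᵥ (0 : Fin 24) = p ∨ g +ᵥ (8 : Fin 24) = p := by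
  decide +kernel

theorem leaveAdj_zero_and_eight_iff : ∀ q : Fin 24,
    (LeaveAdj (development (ZMod 16) baseBlock) 0 q ↔ q = leaveSucc 0 ∨ 0 = leaveSucc q) ∧
    (LeaveAdj (development (ZMod 16) baseBlock) 8 q ↔ q = leaveSucc 8 ∨ 8 = leaveSucc q) := by
  simp only [leaveAdj_development_iff]
  decide +kernel

theorem leaveAdj_development_baseBlock_iff (p q : Fin 24) :
    LeaveAdj (development (ZMod 16) baseBlock) p q ↔ q = leaveSucc p ∨ p = leaveSucc q := by
  obtain ⟨g, hp⟩ := exists_vadd_zero_or_eight_eq p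
  obtain ⟨q, rfl⟩ := AddAction.surjective g q
  rcases hp with rfl | rfl <;>
    simp only [leaveAdj_development_vadd_iff, leaveSucc_vadd, vadd_left_cancel_iff,
      leaveAdj_zero_and_eight_iff]

/-- The `k`-th point of the `i`-th leave cycle; the cycles are `(aₖ)`, `(b₂ₖ)` and `(b₂ₖ₊₁)`. -/
def leaveCycle : Fin 3 × ZMod 8 → Fin 24
  | (0, k) => Fin.ofNat 24 k.val
  | (1, k) => Fin.ofNat 24 (8 + 2 * k.val)
  | (2, k) => Fin.ofNat 24 (8 + (2 * k.val + 1))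

theorem leaveCycle_bijective : Function.Bijective leaveCycle := by
  decide +kernel

theorem leaveCycle_add_one :
    ∀ (i : Fin 3) (k : ZMod 8), leaveCycle (i, k + 1) = leaveSucc (leaveCycle (i, k)) := by
  decide +kernel

/-- There is a 2-(24,4,1) packing with 42 blocks whose leave is a vertex-disjoint
union of cycles of lengths [8, 8, 8], covering all 24 points. -/
theorem exists_max_packing_with_leave_type :
    ∃ B : Finset (Finset (Fin 24)), IsPacking B ∧ B.card = 42 ∧
      LeaveIsCycleType B [8, 8, 8] :=
  ⟨development (ZMod 16) baseBlock,
    isPacking_development card_baseBlock vadd_baseBlock_eq_or_card_inter_le_one,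
    card_development_baseBlock,
    leaveIsCycleType_replicate leaveCycle_bijective leaveCycle_add_one
      leaveAdj_development_baseBlock_iff⟩
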